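/- Uniform convergence of the bulk density: fix θ with −√2 < θ < √2 and R > 0. Then lim_{N→∞} sup_{|x| < R} | L^N(x/N + θ, x/N + θ) − √(2 − θ²)/π | = 0. -/

import Mathlib

open Real MeasureTheory Filter Set

/-- Physicists' Hermite polynomial `H_n(x) = (-1)^n e^{x^2} (d/dx)^n e^{-x^2}`. -/
noncomputable def hermiteP (n : ℕ) (x : ℝ) : ℝ :=
  (-1 : ℝ) ^ n * Real.exp (x ^ 2) * iteratedDeriv n (fun t => Real.exp (-t ^ 2)) x

/-- Oscillator wave function `ψ_n(x) = (√π 2^n n!)^{-1/2} e^{-x^2/2} H_n(x)`. -/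
noncomputable def osc (n : ℕ) (x : ℝ) : ℝ :=
  (Real.sqrt (Real.sqrt Real.pi * 2 ^ n * (n.factorial : ℝ)))⁻¹ *
    Real.exp (-x ^ 2 / 2) * hermiteP n x

/-- The kernel `K^N(x,y) = Σ_{k=0}^{N-1} ψ_k(x) ψ_k(y)`. -/
noncomputable def kerK (N : ℕ) (x y : ℝ) : ℝ :=
  ∑ k ∈ Finset.range N, osc k x * osc k y

/-- The rescaled kernel `L^N(x,y) = N^{-1/2} K^N(√N x, √N y)`. -/
noncomputable def kerL (N : ℕ) (x y : ℝ) : ℝ :=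
  (Real.sqrt (N : ℝ))⁻¹ * kerK N (Real.sqrt (N : ℝ) * x) (Real.sqrt (N : ℝ) * y)


/-! ### Hermite recurrences -/

lemma gauss_contDiff : ContDiff ℝ ⊤ (fun t : ℝ => Real.exp (-t ^ 2)) := by fun_prop

lemma gauss_hasDeriv (n : ℕ) (x : ℝ) :
    HasDerivAt (iteratedDeriv n (fun t : ℝ => Real.exp (-t ^ 2)))
      (iteratedDeriv (n + 1) (fun t : ℝ => Real.exp (-t ^ 2)) x) x := by
  rw [iteratedDeriv_succ]
  apply DifferentiableAt.hasDerivAt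
  exact (gauss_contDiff.differentiable_iteratedDeriv n (by exact_mod_cast WithTop.coe_lt_top _)) x

lemma gauss_one (x : ℝ) : iteratedDeriv 1 (fun t : ℝ => Real.exp (-t ^ 2)) x
    = -2 * x * Real.exp (-x ^ 2) := by
  rw [iteratedDeriv_one]
  have h : HasDerivAt (fun t : ℝ => Real.exp (-t ^ 2))
      (Real.exp (-x ^ 2) * (-(2 * x))) x := by
    have := ((hasDerivAt_pow 2 x).neg).exp
    simpa using this
  rw [h.deriv]; ring

lemma gauss_rec (n : ℕ) : ∀ x : ℝ,
    iteratedDeriv (n + 2) (fun t : ℝ => Real.exp (-t ^ 2)) x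
    = -2 * x * iteratedDeriv (n + 1) (fun t : ℝ => Real.exp (-t ^ 2)) x
      - 2 * (n + 1) * iteratedDeriv n (fun t : ℝ => Real.exp (-t ^ 2)) x := by
  induction n with
  | zero =>
    intro x
    have h1 := gauss_hasDeriv 1 x
    have h0 := gauss_hasDeriv 0 x
    have e : iteratedDeriv 1 (fun t : ℝ => Real.exp (-t ^ 2)) =
        fun x => -2 * x * iteratedDeriv 0 (fun t : ℝ => Real.exp (-t ^ 2)) x := by
      funext y; rw [gauss_one, iteratedDeriv_zero]
    rw [e] at h1
    have h2 := ((hasDerivAt_id' x).const_mul (-2)).mul h0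
    have := h1.unique h2
    simp only [zero_add] at this ⊢
    rw [this]; push_cast; ring
  | succ n ih =>
    intro x
    have h2 := gauss_hasDeriv (n + 2) x
    have h1 := gauss_hasDeriv (n + 1) x
    have h0 := gauss_hasDeriv n x
    rw [funext ih] at h2
    have h3 := (((hasDerivAt_id' x).const_mul (-2)).mul h1).sub (h0.const_mul (2 * ((n : ℝ) + 1)))
    have := h2.unique h3
    rw [show n + 1 + 2 = n + 2 + 1 by ring, this]
    push_cast
    rw [show n + 1 + 1 = n + 2 by ring]
    ring

lemma hermiteP_hasDeriv (n : ℕ) (x : ℝ) :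
    HasDerivAt (hermiteP n) (2 * x * hermiteP n x - hermiteP (n + 1) x) x := by
  have h : HasDerivAt (fun t : ℝ => Real.exp (t ^ 2)) (Real.exp (x ^ 2) * (2 * x)) x := by
    simpa using (hasDerivAt_pow 2 x).exp
  have := (h.const_mul ((-1 : ℝ) ^ n)).mul (gauss_hasDeriv n x)
  refine this.congr_deriv ?_
  unfold hermiteP
  rw [pow_succ]; ring

lemma hermiteP_rec (n : ℕ) (x : ℝ) :
    hermiteP (n + 2) x = 2 * x * hermiteP (n + 1) x - 2 * (n + 1) * hermiteP n x := by
  unfold hermiteP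
  rw [gauss_rec, pow_succ, pow_succ]; ring

noncomputable def oscC (n : ℕ) : ℝ :=
  (Real.sqrt (Real.sqrt Real.pi * 2 ^ n * (n.factorial : ℝ)))⁻¹

/-- `√(2(n+1))`. -/
noncomputable def oscR (n : ℕ) : ℝ := Real.sqrt (2 * ((n : ℝ) + 1))

lemma oscR_sq (n : ℕ) : oscR n ^ 2 = 2 * ((n : ℝ) + 1) := Real.sq_sqrt (by positivity)

lemma oscR_pos (n : ℕ) : 0 < oscR n := Real.sqrt_pos.2 (by positivity)

lemma oscC_succ (n : ℕ) : oscR n * oscC (n + 1) = oscC n := by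
  have hp : oscC (n + 1) = (oscR n)⁻¹ * oscC n := by
    unfold oscC oscR
    rw [← mul_inv, ← Real.sqrt_mul (by positivity)]
    congr 2
    rw [Nat.factorial_succ]; push_cast; ring
  rw [hp, mul_inv_cancel_left₀ (oscR_pos n).ne']

lemma osc_eq (n : ℕ) (x : ℝ) : osc n x = oscC n * Real.exp (-x ^ 2 / 2) * hermiteP n x := rfl

lemma osc_hasDeriv (n : ℕ) (x : ℝ) :
    HasDerivAt (osc n) (x * osc n x - oscR n * osc (n + 1) x) x := by
  have h : HasDerivAt (fun t : ℝ => Real.exp (-t ^ 2 / 2)) (Real.exp (-x ^ 2 / 2) * (-x)) x := by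
    have := (((hasDerivAt_pow 2 x).neg).div_const 2).exp
    refine this.congr_deriv ?_
    simp
    ring
  have := (h.const_mul (oscC n)).mul (hermiteP_hasDeriv n x)
  refine this.congr_deriv ?_
  rw [osc_eq, osc_eq, ← oscC_succ n]; ring

lemma osc_rec (n : ℕ) (x : ℝ) :
    oscR (n + 1) * osc (n + 2) x = 2 * x * osc (n + 1) x - oscR n * osc n x := by
  have h1 := oscC_succ (n + 1)
  have h2 := oscC_succ n
  have h3 := oscR_sq n
  rw [osc_eq, osc_eq, osc_eq, hermiteP_rec, ← h2, ← h1]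
  simp only [show n + 1 + 1 = n + 2 by ring]
  linear_combination (oscR (n+1) * oscC (n+2) * Real.exp (-x ^ 2 / 2) * hermiteP n x) * h3

lemma osc_rec_zero (x : ℝ) : oscR 0 * osc 1 x = 2 * x * osc 0 x := by
  have h1 := oscC_succ 0
  rw [osc_eq, osc_eq, ← h1]
  unfold hermiteP
  rw [gauss_one, iteratedDeriv_zero]
  simp only [zero_add]
  ring

/-- derivative of `ψ_{n+1}`. -/
noncomputable def oscD (n : ℕ) (x : ℝ) : ℝ := oscR n * osc n x - x * osc (n + 1) x

lemma osc_succ_hasDeriv (n : ℕ) (x : ℝ) : HasDerivAt (osc (n + 1)) (oscD n x) x := by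
  refine (osc_hasDeriv (n + 1) x).congr_deriv ?_
  rw [osc_rec, oscD]; ring

lemma oscD_hasDeriv (n : ℕ) (x : ℝ) :
    HasDerivAt (oscD n) (-((2 * (n + 1 : ℝ) + 1) - x ^ 2) * osc (n + 1) x) x := by
  have := ((osc_hasDeriv n x).const_mul (oscR n)).sub ((hasDerivAt_id' x).mul (osc_succ_hasDeriv n x))
  refine this.congr_deriv ?_
  rw [oscD]
  linear_combination (-osc (n+1) x) * oscR_sq n

lemma kerK_formula0 (n : ℕ) (x : ℝ) : kerK (n + 1) x x =
    (oscR n ^ 2 * osc n x ^ 2 - 2 * x * oscR n * osc n x * osc (n + 1) x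
      + oscR n ^ 2 * osc (n + 1) x ^ 2) / 2 := by
  induction n with
  | zero =>
    have h := osc_rec_zero x
    have h2 := oscR_sq 0
    simp only [kerK, zero_add, Finset.sum_range_one]
    push_cast at h2
    linear_combination (-1/2 * osc 0 x ^ 2) * h2 - (oscR 0 * osc 1 x / 2) * h
  | succ n ih =>
    have h := osc_rec n x
    have e : kerK (n + 1 + 1) x x = kerK (n + 1) x x + osc (n + 1) x * osc (n + 1) x := by
      simp only [kerK]; rw [Finset.sum_range_succ]
    have h1 := oscR_sq n
    have h2 := oscR_sq (n + 1)
    push_cast at h2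
    rw [e, ih]
    simp only [show n + 1 + 1 = n + 2 by ring] at *
    linear_combination (osc (n+1) x ^2/2) * (h1 - h2) - ((oscR (n + 1) * osc (n + 2) x  - oscR n * osc n x) / 2) * h

lemma kerK_formula (n : ℕ) (x : ℝ) : kerK (n + 1) x x =
    (oscD n x ^ 2 + (2 * (n + 1 : ℝ) + 1 - x ^ 2) * osc (n + 1) x ^ 2) / 2
      - osc (n + 1) x ^ 2 / 2 := by
  rw [kerK_formula0, oscD]
  linear_combination (osc (n+1) x ^2/2) * oscR_sq n

lemma osc_zero_pos (x : ℝ) : 0 < osc 0 x := by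
  rw [osc_eq]
  unfold hermiteP oscC
  rw [iteratedDeriv_zero]
  have := Real.pi_pos
  positivity

lemma kerK_pos (n : ℕ) (x : ℝ) : 0 < kerK (n + 1) x x := by
  unfold kerK
  refine Finset.sum_pos' (fun i _ => mul_self_nonneg _) ⟨0, by simp, ?_⟩
  exact mul_pos (osc_zero_pos x) (osc_zero_pos x)

/-! ### Value at zero -/

lemma osc_sq_rec (n : ℕ) : ((n : ℝ) + 2) * osc (n + 2) 0 ^ 2 = (n + 1) * osc n 0 ^ 2 := by
  have h := osc_rec n 0
  have h1 := oscR_sq n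
  have h2 := oscR_sq (n + 1)
  push_cast at h2
  have h3 : (oscR (n + 1) * osc (n + 2) 0) ^ 2 = (oscR n * osc n 0) ^ 2 := by rw [h]; ring
  rw [mul_pow, mul_pow, h1, h2] at h3
  linarith

lemma osc_odd (m : ℕ) : osc (2 * m + 1) 0 = 0 := by
  induction m with
  | zero =>
    have h := osc_rec_zero 0
    simpa [(oscR_pos 0).ne'] using h
  | succ m ih =>
    have h := osc_sq_rec (2 * m + 1)
    rw [ih] at h
    have h' : osc (2 * m + 1 + 2) 0 ^ 2 = 0 := by
      have : ((2 * m + 1 : ℕ) : ℝ) + 2 ≠ 0 := by positivity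
      rw [zero_pow two_ne_zero, mul_zero] at h
      exact (mul_eq_zero.1 h).resolve_left this
    exact pow_eq_zero_iff (two_ne_zero) |>.1 h'

lemma osc_even (m : ℕ) :
    (osc (2 * m) 0 ^ 2) ^ 2 * (2 * m + 1) * Real.pi * Real.Wallis.W m = 1 := by
  induction m with
  | zero =>
    have hp := Real.pi_pos
    have : osc 0 0 ^ 2 = (Real.sqrt Real.pi)⁻¹ := by
      rw [osc_eq]; unfold oscC hermiteP
      rw [iteratedDeriv_zero]
      simp
    simp only [mul_zero, this, Real.Wallis.W, Finset.range_zero, Finset.prod_empty]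
    rw [inv_pow, Real.sq_sqrt hp.le]
    field_simp
    simp
  | succ m ih =>
    have h := osc_sq_rec (2 * m)
    push_cast at h
    rw [Real.Wallis.W_succ]
    have h2 : osc (2 * (m + 1)) 0 ^ 2 = (2 * m + 1) * osc (2 * m) 0 ^ 2 / (2 * m + 2) := by
      rw [← h]; field_simp; ring_nf
    rw [h2]
    refine Eq.trans ?_ ih
    push_cast
    field_simp
    ring

lemma kerK_zero (n : ℕ) :
    (kerK (n + 1) 0 0) ^ 2 * (Real.pi * Real.Wallis.W (n / 2)) = 2 * ((n / 2 : ℕ) : ℝ) + 1 := by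
  have hK : kerK (n + 1) 0 0 = (n + 1) * (osc n 0 ^ 2 + osc (n + 1) 0 ^ 2) := by
    rw [kerK_formula0, oscR_sq]; ring
  rw [hK]
  rcases Nat.even_or_odd' n with ⟨m, rfl | rfl⟩
  · rw [osc_odd]
    have h := osc_even m
    rw [show 2 * m / 2 = m by omega]
    push_cast
    linear_combination (2 * (m : ℝ) + 1) * h
  · rw [osc_odd]
    have h := osc_even m
    have h2 := osc_sq_rec (2 * m)
    rw [show (2 * m + 1) / 2 = m by omega, show 2 * m + 1 + 1 = 2 * m + 2 by ring]
    push_cast at h2 ⊢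
    have h3 : ((2 * (m : ℝ) + 1 + 1) * (0 ^ 2 + osc (2 * m + 2) 0 ^ 2)) = (2 * m + 1) * osc (2 * m) 0 ^ 2 := by
      linear_combination h2
    rw [h3]
    linear_combination (2 * (m : ℝ) + 1) * h

/-! ### Adiabatic invariant -/

lemma adiabatic (p q : ℝ → ℝ) (A X m : ℝ) (hm : 0 < m) (hX : 0 ≤ X) (hmA : m ^ 2 ≤ A - X ^ 2)
    (hp : ∀ x, HasDerivAt p (q x) x)
    (hq : ∀ x, HasDerivAt q (-(A - x ^ 2) * p x) x)
    (hpos : ∀ x, |x| ≤ X → 0 < q x ^ 2 + (A - x ^ 2) * p x ^ 2)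
    (hη : X / m ^ 3 ≤ 1) :
    ∀ x, |x| ≤ X → ∃ J : ℝ, 0 < J ∧
      |J - (q x ^ 2 + (A - x ^ 2) * p x ^ 2) / 2 / √(A - x ^ 2)|
        ≤ X / m ^ 3 * ((q x ^ 2 + (A - x ^ 2) * p x ^ 2) / 2 / √(A - x ^ 2)) ∧
      |Real.log J - Real.log ((q 0 ^ 2 + A * p 0 ^ 2) / 2 / √A)| ≤ 3 * A / m ^ 5 * X := by
  set I : ℝ → ℝ := fun x => (q x ^ 2 + (A - x ^ 2) * p x ^ 2) / 2 / √(A - x ^ 2) with hI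
  set J : ℝ → ℝ := fun x => I x - x / √(A - x ^ 2) ^ 3 * (p x * q x) / 2 with hJ
  have hw : ∀ x, |x| ≤ X → m ^ 2 ≤ A - x ^ 2 := by
    intro x hx
    have := sq_le_sq' (by linarith [abs_nonneg x, neg_abs_le x]) (abs_le.1 hx |>.2 : x ≤ X)
    have : x ^ 2 ≤ X ^ 2 := by
      rw [← sq_abs x]; exact pow_le_pow_left₀ (abs_nonneg x) hx 2
    linarith
  have hw0 : ∀ x, |x| ≤ X → 0 < A - x ^ 2 := fun x hx => lt_of_lt_of_le (by positivity) (hw x hx)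
  have hs : ∀ x, |x| ≤ X → m ≤ √(A - x ^ 2) := fun x hx => Real.le_sqrt_of_sq_le (hw x hx)
  have hIpos : ∀ x, |x| ≤ X → 0 < I x := by
    intro x hx
    have := hpos x hx
    have := Real.sqrt_pos.2 (hw0 x hx)
    simp only [hI]; positivity
  have hpq : ∀ x, |x| ≤ X → |p x * q x| ≤ I x := by
    intro x hx
    have hsp := Real.sqrt_pos.2 (hw0 x hx)
    have hsq := Real.sq_sqrt (hw0 x hx).le
    simp only [hI]
    rw [div_div, le_div_iff₀ (by positivity)]
    set s := √(A - x ^ 2)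
    rw [← hsq, abs_mul, ← sq_abs (q x), ← sq_abs (p x)]
    nlinarith [sq_nonneg (|q x| - s * |p x|)]
  have hJI : ∀ x, |x| ≤ X → |J x - I x| ≤ X / m ^ 3 / 2 * I x := by
    intro x hx
    have hsp := Real.sqrt_pos.2 (hw0 x hx)
    simp only [hJ]
    rw [show I x - x / √(A - x ^ 2) ^ 3 * (p x * q x) / 2 - I x
      = -(x / √(A - x ^ 2) ^ 3 / 2 * (p x * q x)) by ring, abs_neg, abs_mul]
    refine mul_le_mul ?_ (hpq x hx) (abs_nonneg _) (by positivity)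
    rw [abs_div, abs_div, abs_of_pos (show (0:ℝ) < 2 by norm_num), abs_of_pos (show 0 < √(A - x ^ 2) ^ 3 by positivity)]
    have := hs x hx
    gcongr
  have hJlow : ∀ x, |x| ≤ X → I x / 2 ≤ J x := by
    intro x hx
    have h1 := abs_le.1 (hJI x hx)
    have h2 := hIpos x hx
    nlinarith [h1.1]
  have hJpos : ∀ x, |x| ≤ X → 0 < J x := fun x hx => by
    linarith [hJlow x hx, hIpos x hx]
  have hJd : ∀ x, |x| ≤ X → HasDerivAt J
      (-((A + 2 * x ^ 2) / √(A - x ^ 2) ^ 5 / 2 * (p x * q x))) x := by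
    intro x hx
    have hsp := Real.sqrt_pos.2 (hw0 x hx)
    have hsq := Real.sq_sqrt (hw0 x hx).le
    have hwd : HasDerivAt (fun x : ℝ => A - x ^ 2) (-(2 * x)) x := by
      simpa using (hasDerivAt_pow 2 x).const_sub A
    have hsd := hwd.sqrt (hw0 x hx).ne'
    have hG := ((((hq x).fun_pow 2).add (hwd.mul ((hp x).fun_pow 2))).div_const 2).div hsd hsp.ne'
    have h3 := (((hasDerivAt_id' x).div (hsd.fun_pow 3) (by positivity)).mul ((hp x).mul (hq x))).div_const 2
    refine (hG.sub h3).congr_deriv ?_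
    simp only [Pi.add_apply, Pi.mul_apply, Pi.div_apply]
    have hA : A = √(A - x ^ 2) ^ 2 + x ^ 2 := by linarith
    generalize √(A - x ^ 2) = s at *
    subst hA
    push_cast
    field_simp
    ring
  intro x hx
  refine ⟨J x, hJpos x hx, ?_, ?_⟩
  · refine (hJI x hx).trans ?_
    have := hIpos x hx
    have h0 : 0 ≤ X / m ^ 3 := by positivity
    simp only [hI] at this ⊢
    nlinarith
  have h0 : |(0 : ℝ)| ≤ X := by simpa using hX
  have hJ0 : J 0 = (q 0 ^ 2 + A * p 0 ^ 2) / 2 / √A := by simp [hJ, hI]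
  rw [← hJ0]
  have key := Convex.norm_image_sub_le_of_norm_hasDerivWithin_le (𝕜 := ℝ) (f := fun y => Real.log (J y))
    (f' := fun x => (-((A + 2 * x ^ 2) / √(A - x ^ 2) ^ 5 / 2 * (p x * q x))) / J x)
    (s := Set.Icc (-X) X) (C := 3 * A / m ^ 5) (x := 0) (y := x)
    (fun y hy => ((hJd y (abs_le.2 hy)).log (hJpos y (abs_le.2 hy)).ne').hasDerivWithinAt)
    ?_ (convex_Icc _ _) (abs_le.1 h0) (abs_le.1 hx)
  · refine key.trans ?_
    have hA : 0 ≤ A := by nlinarith [sq_nonneg X, sq_nonneg m]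
    rw [sub_zero, Real.norm_eq_abs]
    gcongr
  · intro y hy
    have hy' : |y| ≤ X := abs_le.2 hy
    have hA : 0 < A := by have := hw0 y hy'; nlinarith [sq_nonneg y]
    have hyA : y ^ 2 ≤ A := by have := hw0 y hy'; linarith
    rw [Real.norm_eq_abs, abs_div, abs_neg, abs_mul, abs_of_pos (hJpos y hy'), div_le_iff₀ (hJpos y hy')]
    have hsp := Real.sqrt_pos.2 (hw0 y hy')
    have e1 : |(A + 2 * y ^ 2) / √(A - y ^ 2) ^ 5 / 2| ≤ (3 * A) / m ^ 5 / 2 := by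
      rw [abs_of_nonneg (by positivity)]
      have := hs y hy'
      gcongr
      linarith
    calc _ ≤ (3 * A) / m ^ 5 / 2 * I y :=
          mul_le_mul e1 (hpq y hy') (abs_nonneg _) (by positivity)
      _ ≤ (3 * A) / m ^ 5 / 2 * (2 * J y) := by
          have := hJlow y hy'
          gcongr; linarith
      _ = _ := by ring

/-! ### Asymptotics -/

lemma tendsto_inv_succ : Tendsto (fun n : ℕ => 1 / ((n : ℝ) + 1)) atTop (nhds 0) :=
  tendsto_one_div_add_atTop_nhds_zero_nat

lemma tendsto_half_ratio :
    Tendsto (fun n : ℕ => (2 * ((n / 2 : ℕ) : ℝ) + 1) / (2 * ((n : ℝ) + 1) + 1)) atTop (nhds (1 / 2)) := by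
  have h := tendsto_inv_succ
  have l1 : Tendsto (fun n : ℕ => (1 - 1 / ((n : ℝ) + 1)) / (2 + 1 / ((n : ℝ) + 1))) atTop
      (nhds ((1 - 0) / (2 + 0))) := (h.const_sub 1).div (h.const_add 2) (by norm_num)
  have l2 : Tendsto (fun n : ℕ => 1 / (2 + 1 / ((n : ℝ) + 1))) atTop
      (nhds (1 / (2 + 0))) := (tendsto_const_nhds).div (h.const_add 2) (by norm_num)
  norm_num at l1 l2
  refine tendsto_of_tendsto_of_tendsto_of_le_of_le (by simpa using l1) (by simpa using l2) ?_ ?_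
  · intro n
    have hn : ((n / 2 : ℕ) : ℝ) * 2 + 1 ≥ n := by
      exact_mod_cast (by omega : n / 2 * 2 + 1 ≥ n)
    have e : (1 - ((n : ℝ) + 1)⁻¹) / (2 + ((n : ℝ) + 1)⁻¹) = n / (2 * ((n : ℝ) + 1) + 1) := by
      have : (n : ℝ) + 1 ≠ 0 := by positivity
      field_simp
      ring
    simp only [e]
    gcongr
    linarith
  · intro n
    have hn : ((n / 2 : ℕ) : ℝ) * 2 ≤ n := by
      exact_mod_cast (by omega : n / 2 * 2 ≤ n)
    have e : (2 + ((n : ℝ) + 1)⁻¹)⁻¹ = (n + 1) / (2 * ((n : ℝ) + 1) + 1) := by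
      have : (n : ℝ) + 1 ≠ 0 := by positivity
      field_simp
    simp only [e]
    gcongr
    linarith

lemma tendsto_K0 :
    Tendsto (fun n : ℕ => kerK (n + 1) 0 0 / √(2 * ((n : ℝ) + 1) + 1)) atTop (nhds (1 / Real.pi)) := by
  have hpi := Real.pi_pos
  have hdiv : Tendsto (fun n : ℕ => n / 2) atTop atTop :=
    Nat.tendsto_div_const_atTop (by norm_num)
  have hW := (Real.Wallis.tendsto_W_nhds_pi_div_two.comp hdiv).const_mul Real.pi
  have h := (tendsto_half_ratio.div hW (by positivity)).sqrt
  have e : √(1 / 2 / (Real.pi * (Real.pi / 2))) = 1 / Real.pi := by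
    rw [show 1 / 2 / (Real.pi * (Real.pi / 2)) = (1 / Real.pi) ^ 2 by field_simp]
    exact Real.sqrt_sq (by positivity)
  rw [e] at h
  refine h.congr fun n => ?_
  have hK := kerK_pos n 0
  have hk := kerK_zero n
  have hWp := Real.Wallis.W_pos (n / 2)
  simp only [Pi.div_apply, Function.comp]
  rw [← hk, show kerK (n + 1) 0 0 ^ 2 * (Real.pi * Real.Wallis.W (n / 2)) / (2 * ((n : ℝ) + 1) + 1)
    / (Real.pi * Real.Wallis.W (n / 2)) = kerK (n + 1) 0 0 ^ 2 / (2 * ((n : ℝ) + 1) + 1) by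
      field_simp, Real.sqrt_div' _ (by positivity), Real.sqrt_sq hK.le]

lemma tendsto_I0 :
    Tendsto (fun n : ℕ => (oscD n 0 ^ 2 + (2 * ((n : ℝ) + 1) + 1) * osc (n + 1) 0 ^ 2) / 2
      / √(2 * ((n : ℝ) + 1) + 1)) atTop (nhds (1 / Real.pi)) := by
  have hK := tendsto_K0
  have h2 := hK.mul tendsto_inv_succ
  have h3 : Tendsto (fun n : ℕ => osc (n + 1) 0 ^ 2 / 2 / √(2 * ((n : ℝ) + 1) + 1)) atTop (nhds 0) := by
    refine tendsto_of_tendsto_of_tendsto_of_le_of_le tendsto_const_nhds (by simpa using h2) ?_ ?_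
    · intro n
      positivity
    · intro n
      have hK : kerK (n + 1) 0 0 = (n + 1) * (osc n 0 ^ 2 + osc (n + 1) 0 ^ 2) := by
        rw [kerK_formula0, oscR_sq]; ring
      have hn : (0 : ℝ) < n + 1 := by positivity
      have : kerK (n + 1) 0 0 / √(2 * ((n : ℝ) + 1) + 1) * ((n : ℝ) + 1)⁻¹
        = (osc n 0 ^ 2 + osc (n + 1) 0 ^ 2) / √(2 * ((n : ℝ) + 1) + 1) := by
        rw [hK]; field_simp
      simp only [this]
      gcongr
      nlinarith [sq_nonneg (osc n 0), sq_nonneg (osc (n + 1) 0)]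
  have h4 := hK.add h3
  rw [add_zero] at h4
  refine h4.congr fun n => ?_
  rw [kerK_formula]
  ring

lemma main_seq (θ : ℝ) (hθ : θ ^ 2 < 2) (t : ℕ → ℝ) (ht : Tendsto t atTop (nhds θ)) :
    Tendsto (fun n : ℕ => kerL (n + 1) (t n) (t n)) atTop (nhds (√(2 - θ ^ 2) / Real.pi)) := by
  have hpi := Real.pi_pos
  obtain ⟨δ, hδ⟩ : ∃ δ : ℝ, δ = (2 - θ ^ 2) / 2 := ⟨_, rfl⟩
  have hδ0 : 0 < δ := by rw [hδ]; linarith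
  set r := √δ with hr
  have hr0 : 0 < r := Real.sqrt_pos.2 hδ0
  have hr2 : r ^ 2 = δ := Real.sq_sqrt hδ0.le
  set σ : ℕ → ℝ := fun n => √((n : ℝ) + 1) with hσ
  have hσ0 : ∀ n, 0 < σ n := fun n => Real.sqrt_pos.2 (by positivity)
  have hσ2 : ∀ n, σ n ^ 2 = n + 1 := fun n => Real.sq_sqrt (by positivity)
  set A : ℕ → ℝ := fun n => 2 * ((n : ℝ) + 1) + 1 with hA
  set u : ℕ → ℝ := fun n => σ n * t n with hu
  set G : ℕ → ℝ := fun n => (oscD n (u n) ^ 2 + (A n - u n ^ 2) * osc (n + 1) (u n) ^ 2) / 2 with hG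
  set I : ℕ → ℝ := fun n => G n / √(A n - u n ^ 2) with hI
  set I0 : ℕ → ℝ := fun n => (oscD n 0 ^ 2 + A n * osc (n + 1) 0 ^ 2) / 2 / √(A n) with hI0
  have hI0lim : Tendsto I0 atTop (nhds (1 / Real.pi)) := tendsto_I0
  have hinv := tendsto_inv_succ
  set η : ℕ → ℝ := fun n => |u n| / (r * σ n) ^ 3 with hη
  have hη_lim : Tendsto η atTop (nhds 0) := by
    have h := (ht.abs.div_const (r ^ 3)).mul hinv
    rw [mul_zero] at h
    refine h.congr fun n => ?_
    have := hσ0 n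
    simp only [hη, hu]
    rw [abs_mul, abs_of_pos (hσ0 n), ← hσ2 n]
    field_simp
  set κ : ℕ → ℝ := fun n => 3 * A n / (r * σ n) ^ 5 * |u n| with hκ
  have hκ_lim : Tendsto κ atTop (nhds 0) := by
    have h := (((hinv.const_add 2).const_mul 3).mul (ht.abs.div_const (r ^ 5))).mul hinv
    rw [mul_zero] at h
    refine h.congr fun n => ?_
    have := hσ0 n
    simp only [hκ, hu, hA]
    rw [abs_mul, abs_of_pos (hσ0 n), ← hσ2 n]
    field_simp
  have hwlow : ∀ᶠ n in atTop, (r * σ n) ^ 2 ≤ A n - u n ^ 2 := by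
    have h1 : ∀ᶠ n in atTop, t n ^ 2 < 2 - δ :=
      (ht.pow 2).eventually_lt_const (by rw [hδ]; linarith)
    filter_upwards [h1] with n hn
    simp only [hu, hA]
    rw [mul_pow, mul_pow, hr2, hσ2]
    have : (0 : ℝ) < n + 1 := by positivity
    nlinarith
  have hGpos : ∀ n x, 0 < oscD n x ^ 2 + (A n - x ^ 2) * osc (n + 1) x ^ 2 := by
    intro n x
    have h1 := kerK_pos n x
    rw [kerK_formula] at h1
    have := sq_nonneg (osc (n + 1) x)
    simp only [hA]
    linarith
  have hex : ∀ᶠ n in atTop, ∃ J : ℝ, 0 < J ∧ |J - I n| ≤ η n * I n ∧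
      |Real.log J - Real.log (I0 n)| ≤ κ n := by
    filter_upwards [hwlow, hη_lim.eventually_le_const zero_lt_one] with n hn hn2
    exact adiabatic (osc (n + 1)) (oscD n) (A n) |u n| (r * σ n) (mul_pos hr0 (hσ0 n))
      (abs_nonneg _) (by rw [sq_abs]; exact hn) (osc_succ_hasDeriv n) (oscD_hasDeriv n)
      (fun x _ => hGpos n x) hn2 (u n) le_rfl
  obtain ⟨J, hJ⟩ := hex.choice
  have hI0pos : ∀ n, 0 < I0 n := by
    intro n
    have h := hGpos n 0
    have : 0 < √(A n) := Real.sqrt_pos.2 (by simp only [hA]; positivity)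
    simp only [hI0]
    have h' : 0 < oscD n 0 ^ 2 + A n * osc (n + 1) 0 ^ 2 := by simpa using h
    positivity
  have hIpos : ∀ᶠ n in atTop, 0 < I n := by
    filter_upwards [hwlow] with n hn
    have h := hGpos n (u n)
    have h2 : 0 < √(A n - u n ^ 2) :=
      Real.sqrt_pos.2 (lt_of_lt_of_le (pow_pos (mul_pos hr0 (hσ0 n)) 2) hn)
    simp only [hI, hG]
    positivity
  have hJlim : Tendsto J atTop (nhds (1 / Real.pi)) := by
    have h1 : Tendsto (fun n => Real.log (J n) - Real.log (I0 n)) atTop (nhds 0) :=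
      squeeze_zero_norm' (hJ.mono fun n hn => hn.2.2) hκ_lim
    have h2 := ((Real.continuous_exp.tendsto 0).comp h1).mul hI0lim
    rw [Real.exp_zero, one_mul] at h2
    refine h2.congr' ?_
    filter_upwards [hJ] with n hn
    simp only [Function.comp]
    rw [Real.exp_sub, Real.exp_log hn.1, Real.exp_log (hI0pos n), div_mul_cancel₀ _ (hI0pos n).ne']
  have hIlim : Tendsto I atTop (nhds (1 / Real.pi)) := by
    have h1 : Tendsto (fun n => J n / I n - 1) atTop (nhds 0) := by
      refine squeeze_zero_norm' ?_ hη_lim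
      filter_upwards [hJ, hIpos] with n hn hp
      rw [Real.norm_eq_abs, show J n / I n - 1 = (J n - I n) / I n by field_simp,
        abs_div, abs_of_pos hp, div_le_iff₀ hp]
      exact hn.2.1
    have h2 := h1.add_const 1
    simp only [sub_add_cancel, zero_add] at h2
    have h3 := hJlim.div h2 one_ne_zero
    rw [div_one] at h3
    refine h3.congr' ?_
    filter_upwards [hJ, hIpos] with n hn hp
    have := hn.1
    simp only [Pi.div_apply]
    field_simp
  have hratio : Tendsto (fun n => √(A n - u n ^ 2) / σ n) atTop (nhds (√(2 - θ ^ 2))) := by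
    have h := ((hinv.const_add 2).sub (ht.pow 2)).sqrt
    rw [add_zero] at h
    refine h.congr fun n => ?_
    simp only [hσ]
    rw [← Real.sqrt_div' _ (by positivity)]
    congr 1
    simp only [hu, hA]
    rw [mul_pow, hσ2]
    have : (n : ℝ) + 1 ≠ 0 := by positivity
    field_simp
  have hmain := hratio.mul hIlim
  have herr : Tendsto (fun n => osc (n + 1) (u n) ^ 2 / 2 / σ n) atTop (nhds 0) := by
    have hb := (hmain.mul hinv).div_const δ
    rw [mul_zero, zero_div] at hb
    refine squeeze_zero' (Eventually.of_forall fun n => ?_) ?_ hb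
    · have := hσ0 n
      positivity
    · filter_upwards [hwlow] with n hn
      have hσn := hσ0 n
      have hwp : 0 < A n - u n ^ 2 := lt_of_lt_of_le (pow_pos (mul_pos hr0 (hσ0 n)) 2) hn
      have h2 : 0 < √(A n - u n ^ 2) := Real.sqrt_pos.2 hwp
      have hn0 : (0 : ℝ) < n + 1 := by positivity
      have e : √(A n - u n ^ 2) / σ n * I n * (1 / ((n : ℝ) + 1)) / δ
          = G n / (δ * (n + 1)) / σ n := by
        simp only [hI]; field_simp
      rw [e]
      refine div_le_div_of_nonneg_right ?_ hσn.le
      rw [le_div_iff₀ (by positivity)]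
      rw [mul_pow, hr2, hσ2] at hn
      have := mul_le_mul_of_nonneg_left hn (sq_nonneg (osc (n + 1) (u n)))
      have hGn : G n = (oscD n (u n) ^ 2 + (A n - u n ^ 2) * osc (n + 1) (u n) ^ 2) / 2 := rfl
      rw [hGn]
      nlinarith [sq_nonneg (oscD n (u n))]
  have hfin := hmain.sub herr
  rw [sub_zero, mul_one_div] at hfin
  refine hfin.congr' ?_
  filter_upwards [hwlow] with n hn
  have hσn := hσ0 n
  have hwp : 0 < A n - u n ^ 2 := lt_of_lt_of_le (pow_pos (mul_pos hr0 (hσ0 n)) 2) hn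
  have h2 : 0 < √(A n - u n ^ 2) := Real.sqrt_pos.2 hwp
  have e1 : kerL (n + 1) (t n) (t n) = (σ n)⁻¹ * kerK (n + 1) (u n) (u n) := by
    simp only [kerL, hσ, hu]; push_cast; rfl
  have e2 : kerK (n + 1) (u n) (u n) = G n - osc (n + 1) (u n) ^ 2 / 2 := kerK_formula n (u n)
  rw [e1, e2]
  simp only [hI]
  field_simp

/-- Uniform convergence of the bulk density:
`lim_{N→∞} sup_{|x|<R} |L^N(x/N+θ, x/N+θ) - √(2-θ²)/π| = 0`. -/
theorem bulk_density_uniform_convergence (θ R : ℝ)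
    (hθ1 : -Real.sqrt 2 < θ) (hθ2 : θ < Real.sqrt 2) (hR : 0 < R) :
    ∀ ε : ℝ, 0 < ε → ∃ N0 : ℕ, ∀ N : ℕ, N0 ≤ N → ∀ x : ℝ, |x| < R →
      |kerL N (x / (N : ℝ) + θ) (x / (N : ℝ) + θ) - Real.sqrt (2 - θ ^ 2) / Real.pi| < ε := by
  intro ε hε
  by_contra hcon
  push Not at hcon
  have hθ : θ ^ 2 < 2 := by
    have h := abs_lt.2 ⟨hθ1, hθ2⟩
    have := pow_lt_pow_left₀ h (abs_nonneg θ) two_ne_zero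
    rwa [sq_abs, Real.sq_sqrt (by norm_num)] at this
  classical
  let y : ℕ → ℝ := fun N => if h : ∃ x : ℝ, |x| < R ∧
    ε ≤ |kerL N (x / (N : ℝ) + θ) (x / (N : ℝ) + θ) - Real.sqrt (2 - θ ^ 2) / Real.pi|
    then h.choose else 0
  have hyR : ∀ N, |y N| ≤ R := by
    intro N
    by_cases h : ∃ x : ℝ, |x| < R ∧
      ε ≤ |kerL N (x / (N : ℝ) + θ) (x / (N : ℝ) + θ) - Real.sqrt (2 - θ ^ 2) / Real.pi|
    · simp only [y, dif_pos h]
      exact h.choose_spec.1.le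
    · simp only [y, dif_neg h]
      simpa using hR.le
  have ht : Tendsto (fun n : ℕ => y (n + 1) / ((n + 1 : ℕ) : ℝ) + θ) atTop (nhds θ) := by
    have h0 : Tendsto (fun n : ℕ => y (n + 1) / ((n + 1 : ℕ) : ℝ)) atTop (nhds 0) := by
      have hb := tendsto_inv_succ.const_mul R
      rw [mul_zero] at hb
      refine squeeze_zero_norm (fun n => ?_) hb
      have hn : (0 : ℝ) < n + 1 := by positivity
      push_cast
      rw [Real.norm_eq_abs, abs_div, abs_of_pos hn, mul_one_div]
      have := hyR (n + 1)
      gcongr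
    simpa using h0.add_const θ
  have hlim := main_seq θ hθ _ ht
  obtain ⟨M, hM⟩ := (Metric.tendsto_atTop.1 hlim) ε hε
  obtain ⟨N, hN, x, hx, hbad⟩ := hcon (M + 1)
  obtain ⟨n, rfl⟩ : ∃ n, N = n + 1 := ⟨N - 1, by omega⟩
  have hex : ∃ x : ℝ, |x| < R ∧
    ε ≤ |kerL (n + 1) (x / ((n + 1 : ℕ) : ℝ) + θ) (x / ((n + 1 : ℕ) : ℝ) + θ)
      - Real.sqrt (2 - θ ^ 2) / Real.pi| := ⟨x, hx, hbad⟩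
  have h1 := hM n (by omega)
  rw [Real.dist_eq] at h1
  have h2 := hex.choose_spec.2
  have e : y (n + 1) = hex.choose := by simp only [y, dif_pos hex]
  rw [← e] at h2
  linarith
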